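/- Let (X,T) be a topological dynamical system with metric d. Then for every T-invariant Borel probability measure ρ and every ε > 0, limsup_{n→∞} (1/n) log S_n(d,ρ,ε) ≤ h_top(T), where h_top(T) is the topological entropy of (X,T). -/

import Mathlib

open MeasureTheory Filter

/-- The Bowen-type averaged metric `d̄_n(x,y) = (1/n) ∑_{i=0}^{n-1} d(Tⁱx, Tⁱy)`. -/
noncomputable def dbar {X : Type*} [PseudoMetricSpace X] (T : X → X) (n : ℕ) (x y : X) : ℝ :=
  (∑ i ∈ Finset.range n, dist (T^[i] x) (T^[i] y)) / n

/-- The measure complexity function `S_n(d,ρ,ε)`. -/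
noncomputable def measureComplexity {X : Type*} [PseudoMetricSpace X] [MeasurableSpace X]
    (T : X → X) (ρ : Measure X) (n : ℕ) (ε : ℝ) : ℕ :=
  sInf {m : ℕ | ∃ xs : Fin m → X,
    1 - ε < (ρ (⋃ i, {y | dbar T n (xs i) y < ε})).toReal}

/-! If `T^[k] x` and `T^[k] y` are `ε`-close for every `k < n`, then they are `ε`-close on average
over `k < n`. Hence the centres of a dynamical `(n, ε)`-cover of a set `F` are also centres of
`d̄_n`-balls of radius `ε` covering `F`. As soon as `F` carries mass more than `1 - ε`, the measure
complexity is thus at most the minimal cardinality of such a cover, whose exponential growth rate is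
bounded by the entropy of `F`. -/

open scoped ENNReal

theorem coe_log_natCast_le_ennrealLog {m : ℕ} {a : ℝ≥0∞} (ha : 1 ≤ a) (hma : m ≤ a) :
    (Real.log m : EReal) ≤ ENNReal.log a := by
  obtain rfl | hm := eq_or_ne m 0
  · simpa using ha
  · calc (Real.log m : EReal) = ENNReal.log m := by
          rw [ENNReal.log_pos_real (Nat.cast_ne_zero.2 hm) (ENNReal.natCast_ne_top m),
            ENNReal.toReal_natCast]
      _ ≤ ENNReal.log a := ENNReal.log_le_log hma

section MeasureComplexity

open Dynamics

variable {X : Type*} [PseudoMetricSpace X] {T : X → X} {n : ℕ} {ε : ℝ}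

theorem dbar_comm (T : X → X) (n : ℕ) (x y : X) : dbar T n x y = dbar T n y x := by
  simp only [dbar, dist_comm]

theorem dbar_lt_of_mem_dynEntourage (hε : 0 < ε) {x y : X}
    (hxy : (x, y) ∈ dynEntourage T {p | dist p.1 p.2 < ε} n) : dbar T n x y < ε := by
  obtain rfl | hn := Nat.eq_zero_or_pos n
  · -- `dbar T 0 x y` is the junk value `0 / 0 = 0`.
    simpa [dbar] using hε
  · rw [dbar, div_lt_iff₀ (Nat.cast_pos.2 hn)]
    calc ∑ i ∈ Finset.range n, dist (T^[i] x) (T^[i] y)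
        < ∑ _i ∈ Finset.range n, ε :=
          Finset.sum_lt_sum_of_nonempty (Finset.nonempty_range_iff.2 hn.ne') fun i hi =>
            mem_dynEntourage.1 hxy i (Finset.mem_range.1 hi)
      _ = ε * n := by rw [Finset.sum_const, Finset.card_range, nsmul_eq_mul, mul_comm]

theorem subset_iUnion_dbar_lt_of_isDynCoverOf (hε : 0 < ε) {F s : Set X}
    (hs : IsDynCoverOf T F {p | dist p.1 p.2 < ε} n s) :
    F ⊆ ⋃ x ∈ s, {y | dbar T n x y < ε} := fun y hy => by
  obtain ⟨x, hx, hyx⟩ := hs hy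
  exact Set.mem_biUnion hx ((dbar_comm T n x y).trans_lt (dbar_lt_of_mem_dynEntourage hε hyx))

variable [MeasurableSpace X] {ρ : Measure X}

theorem measureComplexity_le_card {s : Finset X}
    (hs : 1 - ε < ρ.real (⋃ x ∈ s, {y | dbar T n x y < ε})) :
    measureComplexity T ρ n ε ≤ s.card := by
  refine Nat.sInf_le ⟨fun i => s.equivFin.symm i, ?_⟩
  rwa [s.equivFin.symm.surjective.iUnion_comp fun x : s => {y | dbar T n x y < ε},
    Set.iUnion_subtype]

variable [IsFiniteMeasure ρ] {F : Set X}

theorem measureComplexity_le_coverMincard (hε : 0 < ε) (hF : 1 - ε < ρ.real F) (n : ℕ) :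
    (measureComplexity T ρ n ε : ℕ∞) ≤ coverMincard T F {p | dist p.1 p.2 < ε} n :=
  le_iInf₂ fun s hs =>
    have hFs : F ⊆ ⋃ x ∈ s, {y | dbar T n x y < ε} := subset_iUnion_dbar_lt_of_isDynCoverOf hε hs
    Nat.cast_le.2 <| measureComplexity_le_card <|
      hF.trans_le (measureReal_mono hFs (measure_ne_top ρ _))

theorem limsup_log_measureComplexity_le_coverEntropyEntourage (hε : 0 < ε) (hFne : F.Nonempty)
    (hF : 1 - ε < ρ.real F) :
    atTop.limsup (fun n : ℕ => ((Real.log (measureComplexity T ρ n ε) / n : ℝ) : EReal))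
      ≤ coverEntropyEntourage T F {p | dist p.1 p.2 < ε} := by
  refine limsup_le_limsup (Eventually.of_forall fun n => ?_)
  have one_le : (1 : ℝ≥0∞) ≤ coverMincard T F {p | dist p.1 p.2 < ε} n := by
    exact_mod_cast (one_le_coverMincard_iff T F _ n).2 hFne
  have complexity_le :
      (measureComplexity T ρ n ε : ℝ≥0∞) ≤ coverMincard T F {p | dist p.1 p.2 < ε} n := by
    exact_mod_cast ENat.toENNReal_le.2 (measureComplexity_le_coverMincard hε hF n)
  exact EReal.div_le_div_right_of_nonneg n.cast_nonneg'
    (coe_log_natCast_le_ennrealLog one_le complexity_le)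

theorem limsup_log_measureComplexity_le_topologicalEntropy_general (hε : 0 < ε)
    (hFne : F.Nonempty) (hF : 1 - ε < ρ.real F) :
    atTop.limsup (fun n : ℕ => ((Real.log (measureComplexity T ρ n ε) / n : ℝ) : EReal))
      ≤ coverEntropy T F :=
  (limsup_log_measureComplexity_le_coverEntropyEntourage hε hFne hF).trans
    (coverEntropyEntourage_le_coverEntropy T F (Metric.dist_mem_uniformity hε))

end MeasureComplexity

/-- For every invariant Borel probability measure `ρ` and every `ε > 0`,
`limsup_{n→∞} (1/n) log S_n(d,ρ,ε)` is at most the topological entropy of `(X,T)`. -/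
theorem limsup_log_measureComplexity_le_topologicalEntropy
    {X : Type*} [MetricSpace X] [CompactSpace X] [MeasurableSpace X] [BorelSpace X]
    (T : X ≃ₜ X)
    (ρ : Measure X) (hρprob : IsProbabilityMeasure ρ)
    (hρinv : MeasurePreserving (T : X → X) ρ ρ)
    (ε : ℝ) (hε : 0 < ε) :
    Filter.atTop.limsup
        (fun n : ℕ => ((Real.log (measureComplexity (T : X → X) ρ n ε) / n : ℝ) : EReal))
      ≤ Dynamics.coverEntropy (T : X → X) Set.univ := by
  have : Nonempty X := ρ.nonempty_of_neZero
  exact limsup_log_measureComplexity_le_topologicalEntropy_general hε Set.univ_nonempty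
    (by simpa using hε)
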